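/- Let d ≥ 2 and r ≥ 0, and let μ_r be the measure on ℝ^d obtained as the pushforward of the measure (2 ω_r(p⃗))^{-1} dp⃗ on ℝ^{d−1} (minus the origin if r = 0) under the map p⃗ ↦ (ω_r(p⃗), p⃗), where ω_r(p⃗) = √(|p⃗|² + r); μ_r is concentrated on the forward mass shell V_r^+ = { p : η(p,p) + r = 0, p⁰ > 0 }. If Λ : ℝ^d → ℝ^d is a linear map with η(Λp, Λq) = η(p,q) for all p,q and Λ maps V_r^+ into V_r^+, then the pushforward of μ_r under Λ equals μ_r, i.e. μ_r is Lorentz invariant. -/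

import Mathlib

/-!
The shell `V_r⁺` is the graph of `ω_r` over momentum space, so `Λ` induces a map
`f : q ↦ q' = (Λ (ω_r(q), q)).2` of momentum space, and the claim becomes that `f` preserves the
measure `dq / (2 ω_r(q))` (`map_momentumMap`). By the change of variables formula this follows from
two facts.

* `f` is a bijection of the set of admissible momenta (`injOn_momentumMap`, `surjOn_momentumMap`).
  `Λ` is injective because `|det Λ| = 1`, and a map of the forward shell into itself is onto,
  since a preimage on the backward shell would give a forward point that `Λ` sends backward.
* `|det f'(q)| = ω_r(q') / ω_r(q)` (`abs_det_momentumD`). Conjugating `Λ` by shears of determinant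
  one that straighten the tangent spaces of the shell at `p` and `Λ p` makes it block triangular,
  with `f'(q)` as the space block and `ω_r(q) / ω_r(q')` as the time entry.
-/

open Real Set MeasureTheory

noncomputable section

/-- `ω_r(p⃗) = √(|p⃗|² + r)`. -/
def omegaR {m : ℕ} (r : ℝ) (q : Fin m → ℝ) : ℝ := Real.sqrt ((∑ k, (q k)^2) + r)

/-- Minkowski form `η(z,w) = −z⁰w⁰ + z⃗·w⃗` on ℝ^d = ℝ × ℝ^{d−1}. -/
def mink {m : ℕ} (z w : ℝ × (Fin m → ℝ)) : ℝ := -(z.1 * w.1) + ∑ k, z.2 k * w.2 k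

/-- The Lorentz invariant measure `μ_r` on the forward mass shell `V_r⁺`, the
pushforward of `dp⃗/(2ω_r(p⃗))` (minus the origin if `r = 0`) under
`p⃗ ↦ (ω_r(p⃗), p⃗)`. -/
def massShellMeasure (m : ℕ) (r : ℝ) : Measure (ℝ × (Fin m → ℝ)) :=
  Measure.map (fun q => (omegaR r q, q))
    (((volume : Measure (Fin m → ℝ)).restrict {q | r = 0 → q ≠ 0}).withDensity
      (fun q => ENNReal.ofReal ((2 * omegaR r q)⁻¹)))

/-- The forward mass shell `V_r⁺ = {p : η(p,p) + r = 0, p⁰ > 0}`. -/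
def forwardShell (m : ℕ) (r : ℝ) : Set (ℝ × (Fin m → ℝ)) :=
  {p | mink p p + r = 0 ∧ 0 < p.1}

/-! ### Determinants of block maps and of Lorentz transformations -/

/-- The standard basis of spacetime `ℝ × ℝ^m`, indexed by time (`Unit`) and space (`Fin m`). -/
def stBasis (m : ℕ) : Module.Basis (Unit ⊕ Fin m) ℝ (ℝ × (Fin m → ℝ)) :=
  (Module.Basis.singleton Unit ℝ).prod (Pi.basisFun ℝ (Fin m))

lemma det_lower {m : ℕ} (T : (ℝ × (Fin m → ℝ)) →ₗ[ℝ] (ℝ × (Fin m → ℝ)))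
    (a : ℝ) (w : Fin m → ℝ) (g : (Fin m → ℝ) →ₗ[ℝ] (Fin m → ℝ))
    (hT : ∀ t v, T (t, v) = (a * t, t • w + g v)) :
    LinearMap.det T = a * LinearMap.det g := by
  rw [← LinearMap.det_toMatrix (stBasis m), ← LinearMap.det_toMatrix (Pi.basisFun ℝ (Fin m)) g]
  have : LinearMap.toMatrix (stBasis m) (stBasis m) T =
      Matrix.fromBlocks (Matrix.of fun _ _ : Unit => a) 0 (Matrix.of fun i _ => w i)
        (LinearMap.toMatrix (Pi.basisFun ℝ (Fin m)) (Pi.basisFun ℝ (Fin m)) g) := by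
    ext i j
    rcases i with i | i <;> rcases j with j | j <;>
      simp [LinearMap.toMatrix_apply, stBasis, hT]
  rw [this, Matrix.det_fromBlocks_zero₁₂]
  simp

lemma det_shear {m : ℕ} (T : (ℝ × (Fin m → ℝ)) →ₗ[ℝ] (ℝ × (Fin m → ℝ)))
    (l : (Fin m → ℝ) →ₗ[ℝ] ℝ) (hT : ∀ t v, T (t, v) = (t + l v, v)) :
    LinearMap.det T = 1 := by
  rw [← LinearMap.det_toMatrix (stBasis m)]
  have : LinearMap.toMatrix (stBasis m) (stBasis m) T =
      Matrix.fromBlocks 1 (Matrix.of fun _ j => l (Pi.single j 1)) 0 1 := by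
    ext i j
    rcases i with i | i <;> rcases j with j | j <;>
      simp [LinearMap.toMatrix_apply, stBasis, hT, Matrix.one_apply, Pi.single_apply]
  rw [this, Matrix.det_fromBlocks_zero₂₁]
  simp

/-- The Minkowski form as a bilinear form. -/
def minkB (m : ℕ) : LinearMap.BilinForm ℝ (ℝ × (Fin m → ℝ)) :=
  LinearMap.mk₂ ℝ mink
    (by intro a b c; simp [mink, add_mul, Finset.sum_add_distrib]; ring)
    (by intro a b c; simp [mink, mul_add, Finset.mul_sum, mul_assoc])
    (by intro a b c; simp [mink, mul_add, Finset.sum_add_distrib]; ring)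
    (by intro a b c; simp [mink, mul_add, Finset.mul_sum, mul_left_comm])

/-- If `J` is the Gram matrix of the Minkowski form, invariance reads `Mᵀ J M = J`, and `det J ≠ 0`. -/
lemma abs_det_lorentz {m : ℕ} (Λ : (ℝ × (Fin m → ℝ)) →ₗ[ℝ] (ℝ × (Fin m → ℝ)))
    (hΛ : ∀ p q, mink (Λ p) (Λ q) = mink p q) : |LinearMap.det Λ| = 1 := by
  have h1 : (minkB m).comp Λ Λ = minkB m := by
    refine LinearMap.ext₂ fun p q => hΛ p q
  have h2 : LinearMap.BilinForm.toMatrix (stBasis m) (minkB m) = Matrix.fromBlocks (-1) 0 0 1 := by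
    ext i j
    rcases i with i | i <;> rcases j with j | j <;>
      simp [LinearMap.BilinForm.toMatrix_apply, stBasis, minkB, mink, Matrix.one_apply,
        Pi.single_apply, eq_comm]
  have h3 := LinearMap.BilinForm.toMatrix_comp (stBasis m) (stBasis m) (minkB m) Λ Λ
  rw [h1, h2] at h3
  have h4 := congrArg Matrix.det h3
  simp only [Matrix.det_mul, Matrix.det_transpose, LinearMap.det_toMatrix,
    Matrix.det_fromBlocks_zero₁₂] at h4
  simp at h4
  have h5 : LinearMap.det Λ * LinearMap.det Λ = 1 := by linarith
  rcases mul_self_eq_one_iff.1 h5 with h | h <;> simp [h]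

/-! ### The mass shell as a graph over momentum space -/

/-- The momenta parametrizing the forward shell: all of `ℝ^m`, without the origin if `r = 0`.
It is definitionally the set to which `massShellMeasure` restricts Lebesgue measure. -/
def momenta (m : ℕ) (r : ℝ) : Set (Fin m → ℝ) := {q | r = 0 → q ≠ 0}

lemma sum_sq_add_pos {m : ℕ} {r : ℝ} (hr : 0 ≤ r) {q : Fin m → ℝ} (hq : q ∈ momenta m r) :
    0 < (∑ k, (q k) ^ 2) + r := by
  have h0 : 0 ≤ ∑ k, (q k) ^ 2 := Finset.sum_nonneg fun _ _ => sq_nonneg _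
  rcases hr.lt_or_eq with h | h
  · linarith
  · obtain ⟨k, hk⟩ := Function.ne_iff.1 (hq h.symm)
    have : 0 < ∑ k, (q k) ^ 2 :=
      Finset.sum_pos' (fun _ _ => sq_nonneg _) ⟨k, Finset.mem_univ _, by
        have : q k ≠ 0 := hk
        positivity⟩
    linarith

lemma omegaR_pos {m : ℕ} {r : ℝ} (hr : 0 ≤ r) {q : Fin m → ℝ} (hq : q ∈ momenta m r) :
    0 < omegaR r q := Real.sqrt_pos.2 (sum_sq_add_pos hr hq)

lemma mem_shell_iff {m : ℕ} {r : ℝ} (hr : 0 ≤ r) (p : ℝ × (Fin m → ℝ)) :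
    p ∈ forwardShell m r ↔ p.2 ∈ momenta m r ∧ p.1 = omegaR r p.2 := by
  have h0 : 0 ≤ ∑ k, (p.2 k) ^ 2 := Finset.sum_nonneg fun _ _ => sq_nonneg _
  constructor
  · rintro ⟨h, hp⟩
    simp only [mink, ← sq] at h
    refine ⟨?_, ?_⟩
    · rintro rfl h2
      simp [h2] at h
      exact hp.ne' h
    · have hsq : (∑ k, (p.2 k) ^ 2) + r = p.1 ^ 2 := by linarith
      rw [omegaR, hsq, Real.sqrt_sq hp.le]
  · rintro ⟨h1, h2⟩
    refine ⟨?_, h2 ▸ omegaR_pos hr h1⟩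
    have := Real.sq_sqrt (sum_sq_add_pos hr h1).le
    simp only [mink, ← sq]
    rw [h2, omegaR, this]
    ring

/-- The map that `Λ` induces on momenta when the shell is identified with momentum space:
lift `q` to `(ω_r(q), q)`, apply `Λ`, and project to the space components. -/
def momentumMap {m : ℕ} (r : ℝ) (Λ : (ℝ × (Fin m → ℝ)) →ₗ[ℝ] (ℝ × (Fin m → ℝ)))
    (q : Fin m → ℝ) : Fin m → ℝ := (Λ (omegaR r q, q)).2

/-- The differential of `ω_r` at `q`. -/
def omegaD {m : ℕ} (r : ℝ) (q : Fin m → ℝ) : (Fin m → ℝ) →L[ℝ] ℝ :=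
  (omegaR r q)⁻¹ • ∑ k, q k • ContinuousLinearMap.proj k

lemma omegaD_apply {m : ℕ} (r : ℝ) (q v : Fin m → ℝ) :
    omegaD r q v = (omegaR r q)⁻¹ * ∑ k, q k * v k := by
  simp [omegaD]

lemma hasFDerivAt_omegaR {m : ℕ} {r : ℝ} (hr : 0 ≤ r) {q : Fin m → ℝ} (hq : q ∈ momenta m r) :
    HasFDerivAt (omegaR r) (omegaD r q) q := by
  have h1 : HasFDerivAt (fun q : Fin m → ℝ => (∑ k, (q k) ^ 2) + r)
      (∑ k, (2 * q k) • (ContinuousLinearMap.proj k : (Fin m → ℝ) →L[ℝ] ℝ)) q := by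
    refine HasFDerivAt.add_const r (HasFDerivAt.fun_sum fun k _ => ?_)
    simpa using (hasFDerivAt_apply (𝕜 := ℝ) k q).pow 2
  refine (h1.sqrt (sum_sq_add_pos hr hq).ne').congr_fderiv ?_
  ext v
  rw [omegaD_apply]
  simp only [smul_apply, sum_apply,
    ContinuousLinearMap.proj_apply, smul_eq_mul, Finset.mul_sum]
  refine Finset.sum_congr rfl fun k _ => ?_
  have := omegaR_pos hr hq
  change 1 / (2 * omegaR r q) * _ = _
  field_simp

/-- The derivative of `momentumMap` at `q`. -/
def momentumD {m : ℕ} (r : ℝ) (Λ : (ℝ × (Fin m → ℝ)) →ₗ[ℝ] (ℝ × (Fin m → ℝ)))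
    (q : Fin m → ℝ) : (Fin m → ℝ) →L[ℝ] (Fin m → ℝ) :=
  (ContinuousLinearMap.snd ℝ ℝ (Fin m → ℝ)).comp
    ((LinearMap.toContinuousLinearMap Λ).comp ((omegaD r q).prod (ContinuousLinearMap.id ℝ _)))

lemma hasFDerivAt_momentumMap {m : ℕ} {r : ℝ} (hr : 0 ≤ r)
    (Λ : (ℝ × (Fin m → ℝ)) →ₗ[ℝ] (ℝ × (Fin m → ℝ))) {q : Fin m → ℝ} (hq : q ∈ momenta m r) :
    HasFDerivAt (momentumMap r Λ) (momentumD r Λ q) q :=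
  ((ContinuousLinearMap.snd ℝ ℝ (Fin m → ℝ)).comp
    (LinearMap.toContinuousLinearMap Λ)).hasFDerivAt.comp q
      ((hasFDerivAt_omegaR hr hq).prodMk (hasFDerivAt_id q))

lemma omegaR_measurable {m : ℕ} (r : ℝ) : Measurable (omegaR (m := m) r) := by
  unfold omegaR; fun_prop

/-! ### The induced map on momentum space and its Jacobian -/

section Lorentz

variable {m : ℕ} {r : ℝ} {Λ : (ℝ × (Fin m → ℝ)) →ₗ[ℝ] (ℝ × (Fin m → ℝ))}

/-- On the shell, the lift `q ↦ (ω_r(q), q)` intertwines `momentumMap` with `Λ`. -/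
lemma lorentz_lift (hr : 0 ≤ r) (hmaps : Set.MapsTo Λ (forwardShell m r) (forwardShell m r))
    {q : Fin m → ℝ} (hq : q ∈ momenta m r) :
    momentumMap r Λ q ∈ momenta m r ∧
      Λ (omegaR r q, q) = (omegaR r (momentumMap r Λ q), momentumMap r Λ q) := by
  have := (mem_shell_iff hr _).1 (hmaps ((mem_shell_iff hr (omegaR r q, q)).2 ⟨hq, rfl⟩))
  exact ⟨this.1, Prod.ext this.2 rfl⟩

/-- The Jacobian of the induced map is `ω_r(q') / ω_r(q)`, where `q'` is the image of `q`.

Let `B (t, v) = (t + dω_q v, v)`, a shear taking `{0} × ℝ^m` to the tangent space of the shell at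
`p = (ω_r(q), q)`, and let `C` be the inverse of the corresponding shear at `p' = Λ p`. As `Λ`
maps tangent vectors to tangent vectors, `C Λ B` is block triangular with the Jacobian matrix as
its space block. The time component of `C` is `-η(p', ·) / ω_r(q')`, so the time entry
of `C Λ B` is `-η(p, e₀) / ω_r(q') = ω_r(q) / ω_r(q')`. Finally, `|det (C Λ B)| = |det Λ| = 1`. -/
lemma abs_det_momentumD (hr : 0 ≤ r) (hΛ : ∀ p q, mink (Λ p) (Λ q) = mink p q)
    (hmaps : Set.MapsTo Λ (forwardShell m r) (forwardShell m r))
    {q : Fin m → ℝ} (hq : q ∈ momenta m r) :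
    |(momentumD r Λ q).det| = omegaR r (momentumMap r Λ q) / omegaR r q := by
  obtain ⟨hq', hlift⟩ := lorentz_lift hr hmaps hq
  set q' := momentumMap r Λ q with hq'_def
  have hω := omegaR_pos hr hq
  have hω' := omegaR_pos hr hq'
  let B : (ℝ × (Fin m → ℝ)) →ₗ[ℝ] (ℝ × (Fin m → ℝ)) :=
    (LinearMap.fst ℝ ℝ _ + (omegaD r q).toLinearMap ∘ₗ LinearMap.snd ℝ ℝ _).prod
      (LinearMap.snd ℝ ℝ _)
  let C : (ℝ × (Fin m → ℝ)) →ₗ[ℝ] (ℝ × (Fin m → ℝ)) :=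
    (LinearMap.fst ℝ ℝ _ - (omegaD r q').toLinearMap ∘ₗ LinearMap.snd ℝ ℝ _).prod
      (LinearMap.snd ℝ ℝ _)
  have hBapp : ∀ t v, B (t, v) = (t + omegaD r q v, v) := fun _ _ => rfl
  have hCapp : ∀ z, C z = (z.1 - omegaD r q' z.2, z.2) := fun _ => rfl
  have hB : LinearMap.det B = 1 := det_shear B (omegaD r q).toLinearMap hBapp
  have hC : LinearMap.det C = 1 := det_shear C (-(omegaD r q').toLinearMap) fun t v => by
    simp [hCapp, sub_eq_add_neg]
  have hC1 : ∀ z, (C (Λ z)).1 = -(omegaR r q')⁻¹ * mink (omegaR r q, q) z := by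
    intro z
    rw [← hΛ, hlift]
    simp only [hCapp, omegaD_apply, mink]
    field_simp
    ring
  have key : ∀ t v, (C ∘ₗ Λ ∘ₗ B) (t, v) =
      ((omegaR r q / omegaR r q') * t, t • (Λ (1, 0)).2 + (momentumD r Λ q).toLinearMap v) := by
    intro t v
    refine Prod.ext ?_ ?_
    · simp only [LinearMap.comp_apply, hC1, hBapp, omegaD_apply, mink]
      field_simp
      ring
    · have hsplit : B (t, v) = t • ((1 : ℝ), (0 : Fin m → ℝ)) + (omegaD r q v, v) := by
        simp [hBapp]
      simp only [LinearMap.comp_apply, hsplit, map_add, map_smul]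
      simp [hCapp, momentumD]
  have hdet := det_lower _ _ _ _ key
  rw [LinearMap.det_comp, LinearMap.det_comp, hB, hC, one_mul, mul_one] at hdet
  have habs := abs_det_lorentz Λ hΛ
  rw [hdet, abs_mul, abs_of_pos (div_pos hω hω')] at habs
  change |LinearMap.det (momentumD r Λ q).toLinearMap| = _
  rw [eq_div_iff hω.ne']
  field_simp at habs
  linarith

lemma lorentz_injective (hΛ : ∀ p q, mink (Λ p) (Λ q) = mink p q) : Function.Injective Λ := by
  have h : LinearMap.det Λ ≠ 0 := by
    intro h
    simpa [h] using abs_det_lorentz Λ hΛ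
  exact LinearMap.ker_eq_bot.1 (by
    by_contra hk
    exact h (LinearMap.det_eq_zero_iff_ker_ne_bot.2 hk))

lemma injOn_momentumMap (hr : 0 ≤ r) (hΛ : ∀ p q, mink (Λ p) (Λ q) = mink p q)
    (hmaps : Set.MapsTo Λ (forwardShell m r) (forwardShell m r)) :
    Set.InjOn (momentumMap r Λ) (momenta m r) := by
  intro a ha b hb hab
  have h1 := (lorentz_lift hr hmaps ha).2
  rw [hab, ← (lorentz_lift hr hmaps hb).2] at h1
  exact congrArg Prod.snd (lorentz_injective hΛ h1)

/-- If `Λ z` is on the forward shell then so is `z`: otherwise `-z` would be, hence also `-Λ z`. -/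
lemma surjOn_momentumMap (hr : 0 ≤ r) (hΛ : ∀ p q, mink (Λ p) (Λ q) = mink p q)
    (hmaps : Set.MapsTo Λ (forwardShell m r) (forwardShell m r)) :
    Set.SurjOn (momentumMap r Λ) (momenta m r) (momenta m r) := by
  intro q hq
  obtain ⟨hp, hpos⟩ := (mem_shell_iff hr (omegaR r q, q)).2 ⟨hq, rfl⟩
  obtain ⟨z, hz⟩ := LinearMap.injective_iff_surjective.1 (lorentz_injective hΛ) (omegaR r q, q)
  have hzr : mink z z + r = 0 := by rw [← hΛ, hz]; exact hp
  rcases lt_trichotomy z.1 0 with hneg | h0 | hz0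
  · have hmem : -z ∈ forwardShell m r := by
      refine ⟨?_, by simpa using hneg⟩
      simpa [mink] using hzr
    have := (hmaps hmem).2
    rw [map_neg, hz] at this
    simp at this hpos
    linarith
  · exfalso
    simp only [mink, h0] at hzr
    have hn : ∀ k ∈ Finset.univ, 0 ≤ z.2 k * z.2 k := fun k _ => mul_self_nonneg _
    have hs : ∑ k, z.2 k * z.2 k = 0 := by
      have := Finset.sum_nonneg hn
      linarith
    -- with `z⁰ = 0`, all of `z` vanishes, contradicting `Λ z ≠ 0`
    have hz2 : z = 0 := Prod.ext h0 (funext fun k => by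
      simpa using (Finset.sum_eq_zero_iff_of_nonneg hn).1 hs k (Finset.mem_univ k))
    rw [hz2, map_zero] at hz
    have := congrArg Prod.fst hz
    simp at this hpos
    linarith
  · obtain ⟨h1, h2⟩ := (mem_shell_iff hr z).1 ⟨hzr, hz0⟩
    refine ⟨z.2, h1, ?_⟩
    rw [momentumMap, ← h2, Prod.mk.eta, hz]

/-! ### Invariance of the measure -/

lemma measurableSet_momenta : MeasurableSet (momenta m r) := by
  by_cases h : r = 0
  · have : momenta m r = {0}ᶜ := by ext; simp [momenta, h]
    rw [this]
    exact (measurableSet_singleton _).compl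
  · have : momenta m r = Set.univ := by ext; simp [momenta, h]
    rw [this]
    exact MeasurableSet.univ

lemma lorentz_measurable : Measurable Λ := (LinearMap.continuous_of_finiteDimensional Λ).measurable

lemma measurable_momentumMap : Measurable (momentumMap r Λ) :=
  measurable_snd.comp (lorentz_measurable.comp ((omegaR_measurable r).prodMk measurable_id))

/-- Invariance of `dq / (2 ω_r(q))` on momentum space: in the change of variables formula the
Jacobian factor `ω_r(q') / ω_r(q)` turns the density `1 / (2 ω_r(q'))` into `1 / (2 ω_r(q))`. -/
lemma map_momentumMap (hr : 0 ≤ r) (hΛ : ∀ p q, mink (Λ p) (Λ q) = mink p q)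
    (hmaps : Set.MapsTo Λ (forwardShell m r) (forwardShell m r)) :
    Measure.map (momentumMap r Λ)
      (((volume : Measure (Fin m → ℝ)).restrict (momenta m r)).withDensity
        (fun q => ENNReal.ofReal ((2 * omegaR r q)⁻¹))) =
      ((volume : Measure (Fin m → ℝ)).restrict (momenta m r)).withDensity
        (fun q => ENNReal.ofReal ((2 * omegaR r q)⁻¹)) := by
  have hS : MeasurableSet (momenta m r) := measurableSet_momenta
  ext E hE
  have hpre := measurable_momentumMap (r := r) (Λ := Λ) hE
  rw [Measure.map_apply measurable_momentumMap hE, withDensity_apply _ hpre,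
    withDensity_apply _ hE, Measure.restrict_restrict hpre, Measure.restrict_restrict hE]
  have himg : E ∩ momenta m r =
      momentumMap r Λ '' (momentumMap r Λ ⁻¹' E ∩ momenta m r) := by
    rw [Set.inter_comm (_ ⁻¹' E), Set.image_inter_preimage,
      (surjOn_momentumMap hr hΛ hmaps).image_eq_of_mapsTo
        (fun q hq => (lorentz_lift hr hmaps hq).1), Set.inter_comm]
  rw [himg, lintegral_image_eq_lintegral_abs_det_fderiv_mul volume (hpre.inter hS)
    (fun q hq => (hasFDerivAt_momentumMap hr Λ hq.2).hasFDerivWithinAt)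
    ((injOn_momentumMap hr hΛ hmaps).mono Set.inter_subset_right)]
  refine setLIntegral_congr_fun (hpre.inter hS) fun q hq => ?_
  have hω := omegaR_pos hr hq.2
  have hω' := omegaR_pos hr (lorentz_lift hr hmaps hq.2).1
  simp only [abs_det_momentumD hr hΛ hmaps hq.2]
  rw [← ENNReal.ofReal_mul (div_pos hω' hω).le]
  congr 1
  field_simp

end Lorentz

/-- the measure `μ_r` on the forward mass shell is Lorentz invariant:
if `Λ` is linear, preserves the Minkowski form, and maps `V_r⁺` into `V_r⁺`, then
the pushforward of `μ_r` under `Λ` is `μ_r`. -/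
theorem mass_shell_measure_lorentz_invariant (d : ℕ) (hd : 2 ≤ d) (r : ℝ) (hr : 0 ≤ r)
    (Λ : (ℝ × (Fin (d-1) → ℝ)) →ₗ[ℝ] (ℝ × (Fin (d-1) → ℝ)))
    (hΛ : ∀ p q : ℝ × (Fin (d-1) → ℝ), mink (Λ p) (Λ q) = mink p q)
    (hmaps : Set.MapsTo Λ (forwardShell (d-1) r) (forwardShell (d-1) r)) :
    Measure.map Λ (massShellMeasure (d-1) r) = massShellMeasure (d-1) r := by
  have hσ : Measurable fun q : Fin (d-1) → ℝ => (omegaR r q, q) :=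
    (omegaR_measurable r).prodMk measurable_id
  have hinv := map_momentumMap hr hΛ hmaps
  unfold massShellMeasure
  change Measure.map Λ (Measure.map _ ((volume.restrict (momenta (d-1) r)).withDensity _)) =
    Measure.map _ ((volume.restrict (momenta (d-1) r)).withDensity _)
  conv_rhs => rw [← hinv]
  rw [Measure.map_map lorentz_measurable hσ, Measure.map_map hσ measurable_momentumMap]
  refine Measure.map_congr ?_
  refine (withDensity_absolutelyContinuous _ _).ae_le ?_
  filter_upwards [ae_restrict_mem measurableSet_momenta] with q hq
  exact (lorentz_lift hr hmaps hq).2
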